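/- Let n ≥ 1 and let k = 2n. Define the block-diagonal matrix H_e : Matrix (Fin n ⊕ Fin n) (Fin n ⊕ Fin n) ℝ (equivalently a k×k matrix) whose upper-left n×n block has entries 1/(2i + 2j + 1) (0-indexed), whose lower-right n×n block has entries -1/(2i + 2j + 3) (0-indexed), and whose off-diagonal blocks are zero. Then H_e is invertible and the sum of all entries of H_e⁻¹ equals -k. -/

import Mathlib

/-- The block-diagonal matrix `H_e` (for even `k = 2n`): upper-left `n×n` block with
entries `1/(2i+2j+1)` (0-indexed), lower-right `n×n` block with entries
`-1/(2i+2j+3)` (0-indexed), zero off-diagonal blocks. -/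
noncomputable def He (n : ℕ) : Matrix (Fin n ⊕ Fin n) (Fin n ⊕ Fin n) ℝ :=
  Matrix.fromBlocks
    (Matrix.of fun i j => 1 / (2 * ((i : ℕ) : ℝ) + 2 * ((j : ℕ) : ℝ) + 1)) 0 0
    (Matrix.of fun i j => -(1 / (2 * ((i : ℕ) : ℝ) + 2 * ((j : ℕ) : ℝ) + 3)))

/-!
Both diagonal blocks of `H_e` are Cauchy matrices `A i j = 1 / (x i + y j)`. Such a matrix solves
the Sylvester equation `diag(x) A + A diag(y) = J`, with `J` the all-ones matrix. Multiplying by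
`A⁻¹` and taking traces gives `tr (A⁻¹ J) = ∑ x i + ∑ y j`, and `tr (A⁻¹ J)` is the sum of the
entries of `A⁻¹`. Invertibility is Lagrange interpolation: the entries of `A c` are, up to nonzero
factors, the values at the `x i` of the interpolant through nodes `-y j` whose values are nonzero
multiples of the `c j`, and this polynomial has too small a degree to vanish at every `x i` unless
`c = 0`.
-/

section EntrySum

open Matrix

variable {m n R : Type*} [Fintype m] [Fintype n]

lemma trace_mul_of_one [NonAssocSemiring R] (M : Matrix m n R) :
    trace (M * (of fun _ _ => 1 : Matrix n m R)) = ∑ i, ∑ j, M i j := by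
  simp [trace, mul_apply]

variable [DecidableEq m] [DecidableEq n] [CommRing R]

lemma trace_inv_mul_mul_add_mul {A : Matrix n n R} (hA : IsUnit A) (D E : Matrix n n R) :
    (A⁻¹ * (D * A + A * E)).trace = D.trace + E.trace := by
  have hdet : IsUnit A.det := (isUnit_iff_isUnit_det A).mp hA
  rw [mul_add, trace_add, trace_mul_comm, mul_nonsing_inv_cancel_right A D hdet,
    nonsing_inv_mul_cancel_left A E hdet]

lemma sum_inv_fromBlocks_diagonal {A : Matrix m m R} {D : Matrix n n R}
    (hA : IsUnit A) (hD : IsUnit D) :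
    ∑ i, ∑ j, (fromBlocks A 0 0 D)⁻¹ i j = ∑ i, ∑ j, A⁻¹ i j + ∑ i, ∑ j, D⁻¹ i j := by
  simp [inv_fromBlocks_zero₂₁_of_isUnit_iff A 0 D (iff_of_true hA hD)]

end EntrySum

section Cauchy

open Matrix

variable {m n K : Type*} [Field K]

/-- The Cauchy matrix with entries `1 / (x i + y j)`. The sign convention is the one with sums, so
its poles are at `x i = -y j`, where the entry is the junk value `0`. -/
def cauchyMatrix (x : m → K) (y : n → K) : Matrix m n K :=
  of fun i j => (x i + y j)⁻¹

variable {x : m → K} {y : n → K}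

lemma diagonal_mul_cauchyMatrix_add [Fintype m] [Fintype n] [DecidableEq m] [DecidableEq n]
    (hxy : ∀ i j, x i + y j ≠ 0) :
    diagonal x * cauchyMatrix x y + cauchyMatrix x y * diagonal y = of fun _ _ => 1 := by
  ext i j
  simp only [cauchyMatrix, Matrix.add_apply, diagonal_mul, mul_diagonal, of_apply]
  rw [mul_comm (x i), ← mul_add, inv_mul_cancel₀ (hxy i j)]

lemma eval_interpolate_neg_eq_cauchyMatrix_mulVec [Fintype n] [DecidableEq n]
    (hy : Function.Injective y) (hxy : ∀ i j, x i + y j ≠ 0) (c : n → K) (i : m) :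
    (Lagrange.interpolate Finset.univ (-y)
        fun j => c j / Lagrange.nodalWeight Finset.univ (-y) j).eval (x i) =
      (Lagrange.nodal Finset.univ (-y)).eval (x i) * (cauchyMatrix x y *ᵥ c) i := by
  have hnode : ∀ j ∈ Finset.univ, x i ≠ (-y) j := fun j _ h =>
    hxy i j (eq_neg_iff_add_eq_zero.mp h)
  rw [Lagrange.eval_interpolate_not_at_node _ hnode]
  refine congrArg _ (Finset.sum_congr rfl fun j hj => ?_)
  have hnodes : Function.Injective (-y) := neg_injective.comp hy
  have hweight := Lagrange.nodalWeight_ne_zero hnodes.injOn hj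
  simp only [cauchyMatrix, of_apply, Pi.neg_apply, sub_neg_eq_add]
  field_simp

theorem cauchyMatrix_mulVec_injective [Fintype m] [Fintype n]
    (hcard : Fintype.card n ≤ Fintype.card m) (hx : Function.Injective x)
    (hy : Function.Injective y) (hxy : ∀ i j, x i + y j ≠ 0) :
    Function.Injective (cauchyMatrix x y).mulVec := by
  classical
  refine (injective_iff_map_eq_zero (cauchyMatrix x y).mulVecLin).mpr fun c hc => ?_
  have hnodes : Set.InjOn (-y) (Finset.univ : Finset n) := (neg_injective.comp hy).injOn
  let r : n → K := fun j => c j / Lagrange.nodalWeight Finset.univ (-y) j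
  have hroot (i : m) : (Lagrange.interpolate Finset.univ (-y) r).eval (x i) = 0 := by
    rw [eval_interpolate_neg_eq_cauchyMatrix_mulVec hy hxy, ← mulVecLin_apply, hc,
      Pi.zero_apply, mul_zero]
  have hzero : Lagrange.interpolate Finset.univ (-y) r = 0 :=
    Polynomial.eq_zero_of_degree_lt_of_eval_index_eq_zero Finset.univ hx.injOn
      ((Lagrange.degree_interpolate_lt r hnodes).trans_le (by exact_mod_cast hcard))
      fun i _ => hroot i
  funext j
  have hr : r j = 0 := by
    rw [← Lagrange.eval_interpolate_at_node r hnodes (Finset.mem_univ j), hzero,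
      Polynomial.eval_zero]
  exact (div_eq_zero_iff.mp hr).resolve_right
    (Lagrange.nodalWeight_ne_zero hnodes (Finset.mem_univ j))

variable [Fintype n] [DecidableEq n]

theorem isUnit_cauchyMatrix {x y : n → K} (hx : Function.Injective x)
    (hy : Function.Injective y) (hxy : ∀ i j, x i + y j ≠ 0) : IsUnit (cauchyMatrix x y) :=
  mulVec_injective_iff_isUnit.mp (cauchyMatrix_mulVec_injective le_rfl hx hy hxy)

theorem sum_inv_cauchyMatrix {x y : n → K} (hx : Function.Injective x)
    (hy : Function.Injective y) (hxy : ∀ i j, x i + y j ≠ 0) :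
    ∑ i, ∑ j, (cauchyMatrix x y)⁻¹ i j = ∑ i, x i + ∑ i, y i := by
  rw [← trace_mul_of_one, ← diagonal_mul_cauchyMatrix_add hxy,
    trace_inv_mul_mul_add_mul (isUnit_cauchyMatrix hx hy hxy), trace_diagonal, trace_diagonal]

end Cauchy

lemma injective_mul_natCast_add {R : Type*} [Ring R] [IsDomain R] [CharZero R] {a : R}
    (ha : a ≠ 0) (b : R) (n : ℕ) : Function.Injective fun i : Fin n => a * ((i : ℕ) : R) + b :=
  (add_left_injective b).comp <|
    (mul_right_injective₀ ha).comp <| Nat.cast_injective.comp Fin.val_injective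

/-- The nodes of the upper-left block of `H_e`: half of the offset `1` in `2i + 2j + 1` goes to each
index, which makes the Cauchy matrix symmetric. -/
noncomputable def upperNode (n : ℕ) (i : Fin n) : ℝ :=
  2 * ((i : ℕ) : ℝ) + 1 / 2

/-- The nodes of the lower-right block of `H_e`, chosen as for `upperNode`; they are negative in
order to absorb the sign of that block. -/
noncomputable def lowerNode (n : ℕ) (i : Fin n) : ℝ :=
  -2 * ((i : ℕ) : ℝ) + -(3 / 2)

lemma upperNode_injective (n : ℕ) : Function.Injective (upperNode n) :=
  injective_mul_natCast_add two_ne_zero _ n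

lemma lowerNode_injective (n : ℕ) : Function.Injective (lowerNode n) :=
  injective_mul_natCast_add (neg_ne_zero.mpr two_ne_zero) _ n

lemma upperNode_pos {n : ℕ} (i : Fin n) : 0 < upperNode n i := by
  unfold upperNode
  positivity

lemma lowerNode_neg {n : ℕ} (i : Fin n) : lowerNode n i < 0 := by
  unfold lowerNode
  linarith [Nat.cast_nonneg (α := ℝ) (i : ℕ)]

lemma upperNode_add_lowerNode {n : ℕ} (i : Fin n) : upperNode n i + lowerNode n i = -1 := by
  unfold upperNode lowerNode
  ring

lemma He_eq_fromBlocks_cauchyMatrix (n : ℕ) :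
    He n = Matrix.fromBlocks (cauchyMatrix (upperNode n) (upperNode n)) 0 0
      (cauchyMatrix (lowerNode n) (lowerNode n)) := by
  unfold He cauchyMatrix upperNode lowerNode
  congr 1 <;> ext i j
  · simp only [Matrix.of_apply, one_div]
    ring_nf
  · simp only [Matrix.of_apply, one_div, ← inv_neg]
    ring_nf

/-- `H_e` is invertible and the sum of all entries of its inverse equals `-k`,
where `k = 2n`. -/
theorem He_inverse_entry_sum (n : ℕ) (hn : 1 ≤ n) :
    IsUnit (He n) ∧ ∑ i, ∑ j, (He n)⁻¹ i j = -((2 * n : ℕ) : ℝ) := by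
  have hupper (i j : Fin n) : upperNode n i + upperNode n j ≠ 0 :=
    (add_pos (upperNode_pos i) (upperNode_pos j)).ne'
  have hlower (i j : Fin n) : lowerNode n i + lowerNode n j ≠ 0 :=
    (add_neg (lowerNode_neg i) (lowerNode_neg j)).ne
  have hU := isUnit_cauchyMatrix (upperNode_injective n) (upperNode_injective n) hupper
  have hL := isUnit_cauchyMatrix (lowerNode_injective n) (lowerNode_injective n) hlower
  rw [He_eq_fromBlocks_cauchyMatrix]
  refine ⟨Matrix.isUnit_fromBlocks_zero₂₁.mpr ⟨hU, hL⟩, ?_⟩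
  have hnodes : ∑ i, upperNode n i + ∑ i, lowerNode n i = -(n : ℝ) := by
    simp [← Finset.sum_add_distrib, upperNode_add_lowerNode]
  rw [sum_inv_fromBlocks_diagonal hU hL,
    sum_inv_cauchyMatrix (upperNode_injective n) (upperNode_injective n) hupper,
    sum_inv_cauchyMatrix (lowerNode_injective n) (lowerNode_injective n) hlower]
  push_cast
  linarith
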